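/- Let T be a tournament with prefix P and let T' = T[V(T) \ P]. Then the minimum in-degree of T' satisfies mindeg(T') ≤ 12(ADT(T) + 1). -/

import Mathlib

variable {V : Type*}

def IsTournament (E : V → V → Prop) : Prop :=
  (∀ v : V, ¬ E v v) ∧ ∀ u v : V, u ≠ v → (E u v ↔ ¬ E v u)

def Acyclic (E : V → V → Prop) : Prop :=
  ∀ v : V, ¬ Relation.TransGen E v v

noncomputable def indeg [Fintype V] (E : V → V → Prop) (v : V) : ℕ :=
  Set.ncard {u : V | E u v}

noncomputable def indegOn [Fintype V] (E : V → V → Prop) (X : Set V) (v : V) : ℕ :=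
  Set.ncard {u : V | u ∈ X ∧ E u v}

def IsTriangle (E : V → V → Prop) (t : V × V × V) : Prop :=
  E t.1 t.2.1 ∧ E t.2.1 t.2.2 ∧ E t.2.2 t.1

def triArcs (t : V × V × V) : Set (V × V) :=
  {(t.1, t.2.1), (t.2.1, t.2.2), (t.2.2, t.1)}

def IsADTFamily (E : V → V → Prop) (F : Finset (V × V × V)) : Prop :=
  (∀ t ∈ F, IsTriangle E t) ∧
    ∀ t ∈ F, ∀ s ∈ F, t ≠ s → Disjoint (triArcs t) (triArcs s)

noncomputable def ADT (E : V → V → Prop) : ℕ :=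
  sSup {n : ℕ | ∃ F : Finset (V × V × V), IsADTFamily E F ∧ F.card = n}

def IsFAS (E : V → V → Prop) (S : Finset (V × V)) : Prop :=
  Acyclic fun u v => E u v ∧ (u, v) ∉ S

noncomputable def FAST (E : V → V → Prop) : ℕ :=
  sInf {n : ℕ | ∃ S : Finset (V × V), IsFAS E S ∧ S.card = n}

def IsFVS (E : V → V → Prop) (F : Finset V) : Prop :=
  Acyclic fun a b => E a b ∧ a ∉ F ∧ b ∉ F

noncomputable def FVST [Fintype V] (E : V → V → Prop) : ℕ :=
  sInf {n : ℕ | ∃ F : Finset V, IsFVS E F ∧ F.card = n}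

noncomputable def maxdb [Fintype V] (E : V → V → Prop) : ℕ :=
  (Finset.range (Fintype.card V)).sup fun d => Set.ncard {v : V | indeg E v = d}

open Classical in
noncomputable def prefLen [Fintype V] (E : V → V → Prop) : ℕ :=
  if ∀ d < Fintype.card V, Set.ncard {v : V | indeg E v = d} = 1 then Fintype.card V
  else sInf {d : ℕ | d < Fintype.card V ∧ Set.ncard {v : V | indeg E v = d} ≠ 1}

noncomputable def prefSet [Fintype V] (E : V → V → Prop) : Set V :=
  {v : V | indeg E v < prefLen E}

noncomputable def minIndeg [Fintype V] (E : V → V → Prop) : ℕ :=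
  sInf {k : ℕ | ∃ v : V, indeg E v = k}

noncomputable def minIndegOn [Fintype V] (E : V → V → Prop) (X : Set V) : ℕ :=
  sInf {k : ℕ | ∃ v ∈ X, indegOn E X v = k}

def emptyBuckets [Fintype V] (E : V → V → Prop) : Set ℕ :=
  {d : ℕ | d < Fintype.card V ∧ {v : V | indeg E v = d} = ∅}

def backArcs [Fintype V] (E : V → V → Prop) : Set (V × V) :=
  {p : V × V | E p.1 p.2 ∧ indeg E p.2 ≤ indeg E p.1}

def reverseArc (E : V → V → Prop) (u v : V) : V → V → Prop :=
  fun a b =>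
    (¬ ((a, b) = (u, v) ∨ (a, b) = (v, u)) ∧ E a b) ∨
      ((a, b) = (u, v) ∧ E v u) ∨ ((a, b) = (v, u) ∧ E u v)

def affected [Fintype V] (E : V → V → Prop) (u v : V) : Set V :=
  {w : V | indeg E w + 1 = indeg E u ∨ indeg E w = indeg E u ∨ indeg E w = indeg E u + 1 ∨
      indeg E w + 1 = indeg E v ∨ indeg E w = indeg E v ∨ indeg E w = indeg E v + 1}

def kLong [Fintype V] (E : V → V → Prop) (k : ℕ) (p : V × V) : Prop :=
  (k : ℤ) ≤ |(indeg E p.1 : ℤ) - (indeg E p.2 : ℤ)|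

def longAdj [Fintype V] (E : V → V → Prop) (k : ℕ) (a b : V) : Prop :=
  ((a, b) ∈ backArcs E ∧ kLong E k (a, b)) ∨ ((b, a) ∈ backArcs E ∧ kLong E k (b, a))

def heavySet [Fintype V] (E : V → V → Prop) (k : ℕ) : Set V :=
  {v : V | k < Set.ncard {u : V | longAdj E k u v}}

/-!
Let `v` minimize the in-degree inside `X`, with in-neighbourhood `N` in `X`. Arc-disjoint triangles
`v → w → u → v` through `v` are the same as a matching of pairs `(w, u)`, so a maximal matching has
at most `ADT E` pairs, and its sets `W` of first and `U` of second vertices cover every such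
triangle. If `N ⊆ U`, then `v` has in-degree at most `ADT E` inside `X`. Otherwise some `u ∈ N \ U`
has fewer than `|N \ U| / 2` in-neighbours in `N \ U`, and any other in-neighbour of `u` in `X` lies
in `N ∩ U` or is an out-neighbour of `v`, hence belongs to `W`. By minimality `u` has at least `|N|`
in-neighbours in `X`, which gives `|N| < 3 * ADT E`. This applies to every set `X` of vertices; the
complement of the prefix is one.
-/

theorem IsTournament.asymm {E : V → V → Prop} (hE : IsTournament E) : Std.Asymm E where
  asymm u v huv hvu := by
    rcases eq_or_ne u v with rfl | hne
    · exact hE.1 u huv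
    · exact (hE.2 u v hne).1 huv hvu

open Finset in
theorem exists_two_mul_card_filter_lt {α : Type*} (r : α → α → Prop) [Std.Asymm r]
    [DecidableRel r] {S : Finset α} (hS : S.Nonempty) :
    ∃ u ∈ S, 2 * #{w ∈ S | r w u} < #S := by
  classical
  have in_add_out_lt (u : α) (hu : u ∈ S) :
      #{w ∈ S | r w u} + #{w ∈ S | r u w} < #S := by
    have hdisj : Disjoint {w ∈ S | r w u} {w ∈ S | r u w} :=
      disjoint_filter.2 fun w _ hwu => asymm_of r hwu
    rw [← card_union_of_disjoint hdisj]
    refine card_lt_card ((ssubset_iff_of_subset ?_).2 ⟨u, hu, ?_⟩)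
    · exact union_subset (filter_subset _ _) (filter_subset _ _)
    · simp [irrefl_of r u]
  have sum_in_eq_sum_out :
      ∑ u ∈ S, #{w ∈ S | r w u} = ∑ u ∈ S, #{w ∈ S | r u w} :=
    (sum_card_bipartiteAbove_eq_sum_card_bipartiteBelow (s := S) (t := S) r).symm
  apply exists_lt_of_sum_lt
  calc ∑ u ∈ S, 2 * #{w ∈ S | r w u}
      = ∑ u ∈ S, (#{w ∈ S | r w u} + #{w ∈ S | r u w}) := by
        rw [← mul_sum, two_mul, sum_add_distrib, ← sum_in_eq_sum_out]
    _ < ∑ _u ∈ S, #S := sum_lt_sum_of_nonempty hS in_add_out_lt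

theorem exists_two_mul_indegOn_lt_ncard [Fintype V] (E : V → V → Prop) [Std.Asymm E] {S : Set V}
    (hS : S.Nonempty) : ∃ u ∈ S, 2 * indegOn E S u < S.ncard := by
  classical
  lift S to Finset V using S.toFinite
  obtain ⟨u, hu, hlt⟩ := exists_two_mul_card_filter_lt E (Finset.coe_nonempty.1 hS)
  have hindeg : indegOn E S u = (S.filter fun w => E w u).card := by
    rw [← Set.ncard_coe_finset, Finset.coe_filter]
    rfl
  exact ⟨u, hu, by rwa [Set.ncard_coe_finset, hindeg]⟩

section Matching

variable {α β : Type*}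

/-- `M` is a matching in the bipartite graph with sides `α` and `β` and edge relation `r`: a finite
set of edges, no two of which share an endpoint. -/
def IsRelMatching (r : α → β → Prop) (M : Finset (α × β)) : Prop :=
  (∀ p ∈ M, r p.1 p.2) ∧ Set.InjOn Prod.fst (M : Set (α × β)) ∧
    Set.InjOn Prod.snd (M : Set (α × β))

theorem IsRelMatching.insert [DecidableEq α] [DecidableEq β] {r : α → β → Prop}
    {M : Finset (α × β)} (hM : IsRelMatching r M) {a : α} {b : β} (hab : r a b)
    (ha : ∀ p ∈ M, p.1 ≠ a) (hb : ∀ p ∈ M, p.2 ≠ b) : IsRelMatching r (insert (a, b) M) := by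
  have hnotMem : (a, b) ∉ (M : Set (α × β)) := fun h => ha _ h rfl
  refine ⟨Finset.forall_mem_insert _ _ _ |>.2 ⟨hab, hM.1⟩, ?_, ?_⟩
  · rw [Finset.coe_insert, Set.injOn_insert hnotMem]
    exact ⟨hM.2.1, fun ⟨p, hp, hpa⟩ => ha p hp hpa⟩
  · rw [Finset.coe_insert, Set.injOn_insert hnotMem]
    exact ⟨hM.2.2, fun ⟨p, hp, hpb⟩ => hb p hp hpb⟩

theorem exists_isRelMatching_cover [Finite α] [Finite β] (r : α → β → Prop) :
    ∃ M, IsRelMatching r M ∧ ∀ a b, r a b → ∃ p ∈ M, p.1 = a ∨ p.2 = b := by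
  classical
  obtain ⟨M, hM⟩ := {M | IsRelMatching r M}.toFinite.exists_maximal ⟨∅, by simp [IsRelMatching]⟩
  refine ⟨M, hM.prop, fun a b hab => ?_⟩
  by_contra! huncovered
  have hins : IsRelMatching r (insert (a, b) M) :=
    hM.prop.insert hab (fun p hp => (huncovered p hp).1) (fun p hp => (huncovered p hp).2)
  have hmem : (a, b) ∈ M :=
    hM.le_of_ge hins (Finset.subset_insert _ _) (Finset.mem_insert_self _ _)
  exact (huncovered _ hmem).1 rfl

end Matching

theorem IsADTFamily.card_le_ADT [Finite V] {E : V → V → Prop} {F : Finset (V × V × V)}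
    (hF : IsADTFamily E F) : F.card ≤ ADT E := by
  have := Fintype.ofFinite V
  refine le_csSup ⟨Fintype.card (V × V × V), ?_⟩ ⟨F, hF, rfl⟩
  rintro _ ⟨G, _, rfl⟩
  exact G.card_le_univ

theorem IsTriangle.disjoint_triArcs {E : V → V → Prop} [Std.Irrefl E] {v w u w' u' : V}
    (h : IsTriangle E (v, w, u)) (h' : IsTriangle E (v, w', u')) (hw : w ≠ w') (hu : u ≠ u') :
    Disjoint (triArcs (v, w, u)) (triArcs (v, w', u')) := by
  have hvw : v ≠ w := ne_of_irrefl h.1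
  have huv : u ≠ v := ne_of_irrefl h.2.2
  have hvw' : v ≠ w' := ne_of_irrefl h'.1
  have huv' : u' ≠ v := ne_of_irrefl h'.2.2
  simp only [triArcs, Set.disjoint_insert_left, Set.disjoint_singleton_left, Set.mem_insert_iff,
    Set.mem_singleton_iff, Prod.mk.injEq]
  tauto

theorem IsRelMatching.isADTFamily_map {E : V → V → Prop} [Std.Irrefl E] {v : V}
    {M : Finset (V × V)} (hM : IsRelMatching (fun w u => IsTriangle E (v, w, u)) M) :
    IsADTFamily E (M.map ⟨Prod.mk v, Prod.mk_right_injective v⟩) := by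
  obtain ⟨htri, hfst, hsnd⟩ := hM
  refine ⟨Finset.forall_mem_map.2 htri, ?_⟩
  simp only [Finset.forall_mem_map, Function.Embedding.coeFn_mk]
  intro p hp q hq hne
  have hpq : p ≠ q := fun h => hne (congrArg _ h)
  exact (htri p hp).disjoint_triArcs (htri q hq) (hfst.ne hp hq hpq) (hsnd.ne hp hq hpq)

theorem exists_triangle_cover_card_le_ADT [Finite V] (E : V → V → Prop) [Std.Irrefl E] (v : V) :
    ∃ W U : Finset V, W.card ≤ ADT E ∧ U.card ≤ ADT E ∧
      ∀ w u, IsTriangle E (v, w, u) → w ∈ W ∨ u ∈ U := by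
  classical
  obtain ⟨M, hM, hcover⟩ := exists_isRelMatching_cover fun w u => IsTriangle E (v, w, u)
  have hcard : M.card ≤ ADT E := by simpa using hM.isADTFamily_map.card_le_ADT
  refine ⟨M.image Prod.fst, M.image Prod.snd, Finset.card_image_le.trans hcard,
    Finset.card_image_le.trans hcard, fun w u hwu => ?_⟩
  obtain ⟨p, hp, rfl | rfl⟩ := hcover w u hwu
  · exact .inl (Finset.mem_image_of_mem _ hp)
  · exact .inr (Finset.mem_image_of_mem _ hp)

theorem indegOn_le_indegOn_diff_add_ncard_inter [Fintype V] (E : V → V → Prop) (X Y : Set V)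
    (v : V) : indegOn E X v ≤ indegOn E (X \ Y) v + (X ∩ Y).ncard := by
  have hsub : {w | w ∈ X ∧ E w v} ⊆ {w | w ∈ X \ Y ∧ E w v} ∪ X ∩ Y := by
    rintro w ⟨hwX, hwv⟩
    by_cases hwY : w ∈ Y
    · exact .inr ⟨hwX, hwY⟩
    · exact .inl ⟨⟨hwX, hwY⟩, hwv⟩
  exact (Set.ncard_le_ncard hsub).trans (Set.ncard_union_le _ _)

theorem IsTournament.indegOn_le_indegOn_inNeighbors_add_ncard [Fintype V] {E : V → V → Prop}
    (hE : IsTournament E) (X : Set V) {v u : V} (huv : E u v) {W : Set V}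
    (hW : ∀ w, IsTriangle E (v, w, u) → w ∈ W) :
    indegOn E X u ≤ indegOn E {w | w ∈ X ∧ E w v} u + W.ncard := by
  have := hE.asymm
  have hsub : {w | w ∈ X ∧ E w u} ⊆ {w | w ∈ {x | x ∈ X ∧ E x v} ∧ E w u} ∪ W := by
    rintro w ⟨hwX, hwu⟩
    by_cases hwv : E w v
    · exact .inl ⟨⟨hwX, hwv⟩, hwu⟩
    · have hne : v ≠ w := by
        rintro rfl
        exact asymm_of E huv hwu
      exact .inr (hW w ⟨(hE.2 v w hne).2 hwv, hwu, huv⟩)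
  exact (Set.ncard_le_ncard hsub).trans (Set.ncard_union_le _ _)

theorem IsTournament.indegOn_le_three_mul_ADT [Fintype V] {E : V → V → Prop}
    (hE : IsTournament E) {X : Set V} {v : V} (hmin : ∀ u ∈ X, indegOn E X v ≤ indegOn E X u) :
    indegOn E X v ≤ 3 * ADT E := by
  have := hE.asymm
  obtain ⟨W, U, hW, hU, hcover⟩ := exists_triangle_cover_card_le_ADT E v
  rw [← Set.ncard_coe_finset] at hW hU
  set N := {w | w ∈ X ∧ E w v}
  have hinter : (N ∩ U).ncard ≤ (U : Set V).ncard := Set.ncard_le_ncard Set.inter_subset_right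
  have hsplit : (N ∩ U).ncard + (N \ U).ncard = indegOn E X v :=
    Set.ncard_inter_add_ncard_sdiff_eq_ncard N U
  rcases (N \ U).eq_empty_or_nonempty with hempty | hnonempty
  · rw [hempty, Set.ncard_empty] at hsplit
    omega
  · obtain ⟨u, ⟨⟨huX, huv⟩, huU⟩, hhalf⟩ := exists_two_mul_indegOn_lt_ncard E hnonempty
    have hX : indegOn E X u ≤ indegOn E N u + (W : Set V).ncard :=
      hE.indegOn_le_indegOn_inNeighbors_add_ncard X huv
        fun w hw => (hcover w u hw).resolve_right huU
    have hNU := indegOn_le_indegOn_diff_add_ncard_inter E N U u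
    have hvu := hmin u huX
    omega

theorem minIndegOn_le_indegOn [Fintype V] (E : V → V → Prop) {X : Set V} {v : V} (hv : v ∈ X) :
    minIndegOn E X ≤ indegOn E X v :=
  Nat.sInf_le ⟨v, hv, rfl⟩

theorem exists_indegOn_eq_minIndegOn [Fintype V] (E : V → V → Prop) {X : Set V}
    (hX : X.Nonempty) : ∃ v ∈ X, indegOn E X v = minIndegOn E X :=
  Nat.sInf_mem (s := {k | ∃ v ∈ X, indegOn E X v = k}) (hX.elim fun v hv => ⟨_, v, hv, rfl⟩)

theorem stmt9_general [Fintype V] (E : V → V → Prop) (hT : IsTournament E) (X : Set V) :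
    minIndegOn E X ≤ 3 * ADT E := by
  rcases X.eq_empty_or_nonempty with rfl | hX
  · simp [minIndegOn]
  · obtain ⟨v, -, hv⟩ := exists_indegOn_eq_minIndegOn E hX
    rw [← hv]
    exact hT.indegOn_le_three_mul_ADT fun u hu => hv.trans_le (minIndegOn_le_indegOn E hu)

/-- The minimum in-degree of the tournament with its prefix removed is at most
12(ADT(T) + 1). -/
theorem stmt9 [Fintype V] (E : V → V → Prop) (hT : IsTournament E) :
    minIndegOn E (prefSet E)ᶜ ≤ 12 * (ADT E + 1) := by
  have := stmt9_general E hT (prefSet E)ᶜ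
  omega
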